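/- Let 1 ≤ i ≤ n. The kernel of the map of left B-modules B² → B, (u, v) ↦ u b_i + v c_{i−1}, equals the set {(w c_i a_i, w a_{i−1} b_{i−1} + x c_{i−2}) : w, x ∈ B}; i.e., the complex B² → B² → B with first differential right multiplication by the 2×2 matrix with rows (c_i a_i, a_{i−1} b_{i−1}) and (0, c_{i−2}), and second differential (u, v) ↦ u b_i + v c_{i−1}, is exact at the middle B². -/

import Mathlib

noncomputable section

inductive Gen (n : ℕ) : Type
  | a : Fin (n+1) → Gen n
  | b : Fin (n+1) → Gen n
  | c : Fin (n+1) → Gen n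

variable (K : Type) [Field K] (n : ℕ)

/-- The tensor algebra `T(V)` on the span of the generators, i.e. the free algebra. -/
abbrev FA := FreeAlgebra K (Gen n)

/-- `a_i`, with the convention that out-of-range indices give `0`. -/
def ga (i : ℤ) : FA K n :=
  if h : 0 ≤ i ∧ i ≤ (n : ℤ) then FreeAlgebra.ι K (Gen.a ⟨i.toNat, by omega⟩) else 0

def gb (i : ℤ) : FA K n :=
  if h : 0 ≤ i ∧ i ≤ (n : ℤ) then FreeAlgebra.ι K (Gen.b ⟨i.toNat, by omega⟩) else 0

def gc (i : ℤ) : FA K n :=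
  if h : 0 ≤ i ∧ i ≤ (n : ℤ) then FreeAlgebra.ι K (Gen.c ⟨i.toNat, by omega⟩) else 0

/-- The set `R` of defining relations. -/
def rels : Set (FA K n) :=
  { x | x = ga K n n * gb K n n * gc K n n ∨ x = gc K n 0 * ga K n 0 ∨
      ∃ i : ℕ, i < n ∧
        (x = ga K n i * gb K n i * gc K n i + gc K n (i+1) * ga K n (i+1) * gb K n (i+1) ∨
         x = gb K n (i+1) * gc K n (i+1) * ga K n (i+1) ∨
         x = gc K n i * gc K n (i+1) ∨
         x = gb K n (i+1) * ga K n i) }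

/-- The relation whose ring-quotient is `B = T(V)/⟨R⟩`. -/
def BRel (x y : FA K n) : Prop := x ∈ rels K n ∧ y = 0

/-- The algebra `B = T(V)/⟨R⟩`. -/
abbrev B := RingQuot (BRel K n)

/-- The quotient map `π_B : T(V) → B`. -/
def πB : FA K n →ₐ[K] B K n := RingQuot.mkAlgHom K (BRel K n)

/-- The image of `a_i` in `B` (zero for out-of-range indices). -/
def aB (i : ℤ) : B K n := πB K n (ga K n i)
def bB (i : ℤ) : B K n := πB K n (gb K n i)
def cB (i : ℤ) : B K n := πB K n (gc K n i)

/-- The left annihilator of `x`, as a left ideal of `B`. -/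
def lann (x : B K n) : Ideal (B K n) where
  carrier := {w | w * x = 0}
  add_mem' := by
    intro a b ha hb
    simp only [Set.mem_setOf_eq, add_mul] at *
    rw [ha, hb, add_zero]
  zero_mem' := by simp
  smul_mem' := by
    intro c w hw
    simp only [Set.mem_setOf_eq, smul_eq_mul, mul_assoc] at *
    rw [hw, mul_zero]

end

namespace Aux

inductive G : Type
  | a : ℕ → G
  | b : ℕ → G
  | c : ℕ → G

/-- words are stored reversed: the head is the last letter -/
def ok (n : ℕ) : G → List G → Prop
  | G.a j, w => ¬ (j = 0 ∧ ∃ m, w = G.c 0 :: m) ∧ ¬ (∃ m, w = G.b (j+1) :: m) ∧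
      ¬ (1 ≤ j ∧ ∃ m, w = G.c j :: G.b j :: m)
  | G.b j, w => ¬ (1 ≤ j ∧ ∃ m, w = G.a j :: G.c j :: m)
  | G.c j, w => ¬ (j = n ∧ ∃ m, w = G.b n :: G.a n :: m) ∧ ¬ (∃ k m, j = k + 1 ∧ w = G.c k :: m)

def Nor (n : ℕ) : List G → Prop
  | [] => True
  | x :: w => ok n x w ∧ Nor n w

noncomputable section
open Classical

variable (K : Type) [Field K] (n : ℕ)

abbrev M := List G →₀ K

def red : G → List G → M K
  | G.b j, G.a _ :: G.c _ :: m => - Finsupp.single (G.c (j-1) :: G.b (j-1) :: G.a (j-1) :: m) 1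
  | _, _ => 0

def stepw (x : G) (w : List G) : M K :=
  if Nor n w then (if ok n x w then Finsupp.single (x :: w) 1 else red K x w) else 0

def S (x : G) : M K →ₗ[K] M K := Finsupp.linearCombination K (stepw K n x)

def e (w : List G) : M K := Finsupp.single w 1

variable {K n}

lemma mkNor {x : G} {w : List G} (h : ok n x w) (h' : Nor n w) : Nor n (x :: w) := ⟨h, h'⟩

lemma S_e (x : G) (w : List G) : S K n x (e K w) = stepw K n x w := by
  simp [S, e]

lemma S_ok {x : G} {w : List G} (h : Nor n w) (h' : ok n x w) : S K n x (e K w) = e K (x :: w) := by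
  rw [S_e, stepw, if_pos h, if_pos h', e]

lemma S_nn {x : G} {w : List G} (h : ¬ Nor n w) : S K n x (e K w) = 0 := by
  simp [S_e, stepw, h]

lemma S_bad_a {j : ℕ} {w : List G} (h : ¬ ok n (G.a j) w) : S K n (G.a j) (e K w) = 0 := by
  simp [S_e, stepw, h, red]

lemma S_bad_c {j : ℕ} {w : List G} (h : ¬ ok n (G.c j) w) : S K n (G.c j) (e K w) = 0 := by
  simp [S_e, stepw, h, red]

lemma S_red {j : ℕ} {m : List G} (h : Nor n (G.a (j+1) :: G.c (j+1) :: m)) :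
    S K n (G.b (j+1)) (e K (G.a (j+1) :: G.c (j+1) :: m)) = - e K (G.c j :: G.b j :: G.a j :: m) := by
  have : ¬ ok n (G.b (j+1)) (G.a (j+1) :: G.c (j+1) :: m) := by simp [ok]
  rw [S_e, stepw, if_pos h, if_neg this]
  rfl

lemma not_ok_b {j : ℕ} {w : List G} (h : ¬ ok n (G.b j) w) :
    ∃ k m, j = k + 1 ∧ w = G.a (k+1) :: G.c (k+1) :: m := by
  simp only [ok, not_not] at h
  obtain ⟨h1, m, rfl⟩ := h
  obtain ⟨k, rfl⟩ : ∃ k, j = k + 1 := ⟨j - 1, by omega⟩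
  exact ⟨k, m, rfl, rfl⟩

lemma nor_red {j : ℕ} (hj : j < n) {m : List G} (h : Nor n (G.a (j+1) :: G.c (j+1) :: m)) :
    Nor n (G.c j :: G.b j :: G.a j :: m) := by
  have : j ≠ n := by omega
  simp only [Nor, ok] at h ⊢
  rcases m with _ | ⟨_ | _ | _, m⟩ <;> simp_all
  grind

lemma rel1 (w : List G) : S K n (G.c n) (S K n (G.b n) (S K n (G.a n) (e K w))) = 0 := by
  by_cases hw : Nor n w
  swap
  · simp [S_nn hw]
  by_cases h1 : ok n (G.a n) w
  swap
  · simp [S_bad_a h1]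
  rw [S_ok hw h1]
  have hw1 : Nor n (G.a n :: w) := ⟨h1, hw⟩
  by_cases h2 : ok n (G.b n) (G.a n :: w)
  · rw [S_ok hw1 h2, S_bad_c (by simp [ok])]
  · obtain ⟨k, m, hk, hm⟩ := not_ok_b h2
    rw [hm] at hw1 ⊢
    rw [hk, ← hk]
    conv_lhs => rw [hk]
    subst hk
    rw [S_red hw1, map_neg, S_bad_c (by simp [ok]), neg_zero]

lemma rel2 (w : List G) : S K n (G.a 0) (S K n (G.c 0) (e K w)) = 0 := by
  by_cases hw : Nor n w
  swap
  · simp [S_nn hw]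
  by_cases h1 : ok n (G.c 0) w
  swap
  · simp [S_bad_c h1]
  rw [S_ok hw h1, S_bad_a (by simp [ok])]

lemma rel3 (i : ℕ) (hi : i < n) (w : List G) :
    S K n (G.c i) (S K n (G.b i) (S K n (G.a i) (e K w))) +
    S K n (G.b (i+1)) (S K n (G.a (i+1)) (S K n (G.c (i+1)) (e K w))) = 0 := by
  have hin : i ≠ n := by omega
  by_cases hw : Nor n w
  swap
  · simp [S_nn hw]
  by_cases hc : ∃ m, w = G.c i :: m
  · obtain ⟨m, rfl⟩ := hc
    rw [S_bad_c (j := i+1) (by simp [ok]), map_zero, map_zero, add_zero]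
    by_cases h1 : ok n (G.a i) (G.c i :: m)
    swap
    · simp [S_bad_a h1]
    rw [S_ok hw h1]
    have hw1 : Nor n (G.a i :: G.c i :: m) := ⟨h1, hw⟩
    obtain ⟨k, rfl⟩ : ∃ k, i = k + 1 := by
      rcases i with _ | k
      · simp [ok] at h1
      · exact ⟨k, rfl⟩
    rw [S_red hw1, map_neg, S_bad_c (by simp [ok]), neg_zero]
  by_cases hb : ∃ m, w = G.b (i+1) :: m
  · obtain ⟨m, rfl⟩ := hb
    rw [S_bad_a (j := i) (by simp [ok]), map_zero, map_zero, zero_add]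
    by_cases h1 : ok n (G.c (i+1)) (G.b (i+1) :: m)
    swap
    · simp [S_bad_c h1]
    rw [S_ok hw h1, S_bad_a (by simp [ok]), map_zero]
  have k1 : ok n (G.a i) w := by
    simp only [ok]; grind
  have k2 : ok n (G.b i) (G.a i :: w) := by
    simp only [ok]; grind
  have k3 : ok n (G.c i) (G.b i :: G.a i :: w) := by
    simp only [ok]; grind
  have l1 : ok n (G.c (i+1)) w := by
    simp only [ok]; grind
  have l2 : ok n (G.a (i+1)) (G.c (i+1) :: w) := by
    simp only [ok]; grind
  rw [S_ok hw k1, S_ok (mkNor k1 hw) k2, S_ok (mkNor k2 (mkNor k1 hw)) k3, S_ok hw l1,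
    S_ok (mkNor l1 hw) l2, S_red (mkNor l2 (mkNor l1 hw)), add_neg_cancel]

lemma rel4 (i : ℕ) (w : List G) :
    S K n (G.a (i+1)) (S K n (G.c (i+1)) (S K n (G.b (i+1)) (e K w))) = 0 := by
  by_cases hw : Nor n w
  swap
  · simp [S_nn hw]
  by_cases h1 : ok n (G.b (i+1)) w
  · rw [S_ok hw h1]
    by_cases h2 : ok n (G.c (i+1)) (G.b (i+1) :: w)
    · rw [S_ok (mkNor h1 hw) h2, S_bad_a (by simp [ok])]
    · rw [S_bad_c h2, map_zero]
  · obtain ⟨k, m, hk, rfl⟩ := not_ok_b h1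
    obtain rfl : i = k := by omega
    rw [S_red hw, map_neg, S_bad_c (by simp [ok]), neg_zero, map_zero]

lemma rel5 (i : ℕ) (w : List G) :
    S K n (G.c (i+1)) (S K n (G.c i) (e K w)) = 0 := by
  by_cases hw : Nor n w
  swap
  · simp [S_nn hw]
  by_cases h1 : ok n (G.c i) w
  swap
  · simp [S_bad_c h1]
  rw [S_ok hw h1, S_bad_c (by simp [ok])]

lemma rel6 (i : ℕ) (w : List G) :
    S K n (G.a i) (S K n (G.b (i+1)) (e K w)) = 0 := by
  by_cases hw : Nor n w
  swap
  · simp [S_nn hw]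
  by_cases h1 : ok n (G.b (i+1)) w
  · rw [S_ok hw h1, S_bad_a (by simp [ok])]
  · obtain ⟨k, m, hk, rfl⟩ := not_ok_b h1
    obtain rfl : i = k := by omega
    rw [S_red hw, map_neg, S_bad_a (by simp [ok]), neg_zero]

variable (K n)

def toG : Gen n → G
  | Gen.a i => G.a i
  | Gen.b i => G.b i
  | Gen.c i => G.c i

def Phi0 : FA K n →ₐ[K] (Module.End K (M K))ᵐᵒᵖ :=
  FreeAlgebra.lift K (fun g => MulOpposite.op (S K n (toG n g)))

variable {K n}

lemma Phi0_a {i : ℕ} (hi : i ≤ n) : Phi0 K n (ga K n i) = MulOpposite.op (S K n (G.a i)) := by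
  simp [ga, hi, Phi0, toG]

lemma Phi0_b {i : ℕ} (hi : i ≤ n) : Phi0 K n (gb K n i) = MulOpposite.op (S K n (G.b i)) := by
  simp [gb, hi, Phi0, toG]

lemma Phi0_c {i : ℕ} (hi : i ≤ n) : Phi0 K n (gc K n i) = MulOpposite.op (S K n (G.c i)) := by
  simp [gc, hi, Phi0, toG]

lemma end_ext {f : Module.End K (M K)} (h : ∀ w, f (e K w) = 0) : f = 0 := by
  apply Finsupp.lhom_ext'
  intro w
  apply LinearMap.ext_ring
  exact h w

lemma Phi0_rel (x : FA K n) (hx : x ∈ rels K n) : Phi0 K n x = 0 := by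
  apply MulOpposite.unop_injective
  rw [MulOpposite.unop_zero]
  apply end_ext
  intro w
  rcases hx with rfl | rfl | ⟨i, hi, rfl | rfl | rfl | rfl⟩
  · rw [map_mul, map_mul, Phi0_a le_rfl, Phi0_b le_rfl, Phi0_c le_rfl]
    exact rel1 w
  · have h0 : (0 : ℤ) = ((0 : ℕ) : ℤ) := rfl
    rw [map_mul, h0, Phi0_a (Nat.zero_le n), Phi0_c (Nat.zero_le n)]
    exact rel2 w
  all_goals
    have hs : (i : ℤ) + 1 = ((i + 1 : ℕ) : ℤ) := by push_cast; rfl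
    have hi' : i + 1 ≤ n := hi
    simp only [map_mul, map_add, hs, Phi0_a hi', Phi0_b hi', Phi0_c hi', Phi0_a hi.le,
      Phi0_b hi.le, Phi0_c hi.le]
  · exact rel3 i hi w
  · exact rel4 i w
  · exact rel5 i w
  · exact rel6 i w

variable (K n)

def Phi : B K n →ₐ[K] (Module.End K (M K))ᵐᵒᵖ :=
  RingQuot.liftAlgHom K ⟨Phi0 K n, by
    rintro x y ⟨hx, rfl⟩
    rw [Phi0_rel x hx, map_zero]⟩

lemma Phi_pi (x : FA K n) : Phi K n (πB K n x) = Phi0 K n x := by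
  simp [Phi, πB]

variable {K n}

lemma pi_rel {x : FA K n} (hx : x ∈ rels K n) : πB K n x = 0 := by
  have := RingQuot.mkAlgHom_rel K (s := BRel K n) (x := x) (y := 0) ⟨hx, rfl⟩
  rw [map_zero] at this
  exact this

lemma Bmul_neg (x y : B K n) : x * -y = -(x * y) := mul_neg x y

lemma Bsub_mul (x y z : B K n) : (x - y) * z = x * z - y * z := sub_mul x y z

lemma caB {i : ℕ} (hi : i < n) : aB K n i * bB K n i * cB K n i =
    - (cB K n (i+1 : ℕ) * aB K n (i+1 : ℕ) * bB K n (i+1 : ℕ)) := by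
  have := pi_rel (K := K) (n := n) (Or.inr (Or.inr ⟨i, hi, Or.inl rfl⟩))
  simp only [map_add, map_mul] at this
  push_cast
  exact eq_neg_of_add_eq_zero_left this

lemma bcaB {i : ℕ} (hi : i < n) :
    bB K n (i+1 : ℕ) * cB K n (i+1 : ℕ) * aB K n (i+1 : ℕ) = 0 := by
  have := pi_rel (K := K) (n := n) (Or.inr (Or.inr ⟨i, hi, Or.inr (Or.inl rfl)⟩))
  simp only [map_mul] at this
  push_cast
  exact this

lemma ccB {i : ℕ} (hi : i < n) : cB K n i * cB K n (i+1 : ℕ) = 0 := by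
  have := pi_rel (K := K) (n := n) (Or.inr (Or.inr ⟨i, hi, Or.inr (Or.inr (Or.inl rfl))⟩))
  simp only [map_mul] at this
  push_cast
  exact this

lemma baB {i : ℕ} (hi : i < n) : bB K n (i+1 : ℕ) * aB K n i = 0 := by
  have := pi_rel (K := K) (n := n) (Or.inr (Or.inr ⟨i, hi, Or.inr (Or.inr (Or.inr rfl))⟩))
  simp only [map_mul] at this
  push_cast
  exact this

lemma abcB : aB K n n * bB K n n * cB K n n = 0 := by
  have := pi_rel (K := K) (n := n) (Or.inl rfl)
  simp only [map_mul] at this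
  exact this

lemma ca0B : cB K n (0 : ℕ) * aB K n (0 : ℕ) = 0 := by
  have := pi_rel (K := K) (n := n) (Or.inr (Or.inl rfl))
  simp only [map_mul] at this
  exact this

variable (K n)

def letB : G → B K n
  | G.a i => aB K n i
  | G.b i => bB K n i
  | G.c i => cB K n i

def prodB : List G → B K n
  | [] => 1
  | x :: w => prodB w * letB K n x

def sig : M K →ₗ[K] B K n :=
  Finsupp.linearCombination K (fun w => if Nor n w then prodB K n w else 0)

variable {K n}

lemma sig_e {w : List G} (h : Nor n w) : sig K n (e K w) = prodB K n w := by
  simp [sig, e, h]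

lemma sig_nn {w : List G} (h : ¬ Nor n w) : sig K n (e K w) = 0 := by
  simp [sig, e, h]

lemma sig_cons {x : G} {w : List G} (h : Nor n (x :: w)) :
    sig K n (e K (x :: w)) = sig K n (e K w) * letB K n x := by
  rw [sig_e h, sig_e h.2, prodB]

lemma sig_step_a {i : ℕ} (hi : i ≤ n) (w : List G) :
    sig K n (S K n (G.a i) (e K w)) = sig K n (e K w) * aB K n i := by
  by_cases hw : Nor n w
  swap
  · rw [S_nn hw, sig_nn hw]; simp
  by_cases h : ok n (G.a i) w
  · rw [S_ok hw h, sig_cons ⟨h, hw⟩]; rfl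
  rw [S_bad_a h, map_zero]
  simp only [ok] at h
  by_cases h1 : i = 0 ∧ ∃ m, w = G.c 0 :: m
  · obtain ⟨rfl, m, rfl⟩ := h1
    rw [sig_cons hw, mul_assoc, letB, ca0B, mul_zero]
  by_cases h2 : ∃ m, w = G.b (i+1) :: m
  · obtain ⟨m, rfl⟩ := h2
    rw [sig_cons hw, mul_assoc, letB]
    by_cases hin : i < n
    · rw [baB hin, mul_zero]
    · have : bB K n ((i+1 : ℕ) : ℤ) = 0 := by
        unfold bB gb
        rw [dif_neg (by omega), map_zero]
      rw [this, zero_mul, mul_zero]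
  have h3 : 1 ≤ i ∧ ∃ m, w = G.c i :: G.b i :: m := by tauto
  obtain ⟨h3, m, rfl⟩ := h3
  obtain ⟨k, rfl⟩ : ∃ k, i = k + 1 := ⟨i - 1, by omega⟩
  rw [sig_cons hw, sig_cons hw.2, mul_assoc, mul_assoc, letB, letB, ← mul_assoc (bB K n _),
    bcaB hi, mul_zero]

lemma sig_step_b {i : ℕ} (hi : i ≤ n) (w : List G) :
    sig K n (S K n (G.b i) (e K w)) = sig K n (e K w) * bB K n i := by
  by_cases hw : Nor n w
  swap
  · rw [S_nn hw, sig_nn hw]; simp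
  by_cases h : ok n (G.b i) w
  · rw [S_ok hw h, sig_cons ⟨h, hw⟩]; rfl
  obtain ⟨k, m, rfl, rfl⟩ := not_ok_b h
  have hn := nor_red hi hw
  rw [S_red hw, map_neg, sig_cons hn, sig_cons hn.2, sig_cons hn.2.2, sig_cons hw, sig_cons hw.2]
  have := caB (K := K) (n := n) hi
  simp only [letB, mul_assoc] at this ⊢
  rw [this, Bmul_neg, neg_neg]

lemma sig_step_c {i : ℕ} (hi : i ≤ n) (w : List G) :
    sig K n (S K n (G.c i) (e K w)) = sig K n (e K w) * cB K n i := by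
  by_cases hw : Nor n w
  swap
  · rw [S_nn hw, sig_nn hw]; simp
  by_cases h : ok n (G.c i) w
  · rw [S_ok hw h, sig_cons ⟨h, hw⟩]; rfl
  rw [S_bad_c h, map_zero]
  simp only [ok] at h
  by_cases h1 : i = n ∧ ∃ m, w = G.b n :: G.a n :: m
  · obtain ⟨rfl, m, rfl⟩ := h1
    rw [sig_cons hw, sig_cons hw.2, mul_assoc, mul_assoc, letB, letB, ← mul_assoc (aB K _ _),
      abcB, mul_zero]
  have h2 : ∃ k m, i = k + 1 ∧ w = G.c k :: m := by tauto
  obtain ⟨k, m, rfl, rfl⟩ := h2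
  rw [sig_cons hw, mul_assoc, letB, ccB hi, mul_zero]

lemma lin_ext {N : Type} [AddCommGroup N] [Module K N] {f g : M K →ₗ[K] N}
    (h : ∀ w, f (e K w) = g (e K w)) (m : M K) : f m = g m := by
  have : f = g := by
    apply Finsupp.lhom_ext'
    intro w
    apply LinearMap.ext_ring
    exact h w
  rw [this]

lemma pi_gen (g : Gen n) : πB K n (FreeAlgebra.ι K g) = letB K n (toG n g) := by
  rcases g with i | i | i
  · have : (i : ℕ) ≤ n := by omega
    simp [letB, toG, aB, ga, this]
  · have : (i : ℕ) ≤ n := by omega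
    simp [letB, toG, bB, gb, this]
  · have : (i : ℕ) ≤ n := by omega
    simp [letB, toG, cB, gc, this]

lemma sig_gen (g : Gen n) (m : M K) :
    sig K n (S K n (toG n g) m) = sig K n m * letB K n (toG n g) := by
  refine lin_ext (f := (sig K n) ∘ₗ (S K n (toG n g)))
    (g := (LinearMap.mulRight K (letB K n (toG n g))) ∘ₗ sig K n) ?_ m
  intro w
  rcases g with i | i | i
  · exact sig_step_a (by omega) w
  · exact sig_step_b (by omega) w
  · exact sig_step_c (by omega) w

lemma sig_Phi0 (z : FA K n) : ∀ m : M K,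
    sig K n ((Phi0 K n z).unop m) = sig K n m * πB K n z := by
  induction z using FreeAlgebra.induction with
  | grade0 r =>
    intro m
    rw [AlgHom.commutes, AlgHom.commutes, ← Algebra.commutes, ← Algebra.smul_def, ← map_smul]
    rfl
  | grade1 g =>
    intro m
    rw [pi_gen, ← sig_gen]
    simp [Phi0]
  | mul x y hx hy =>
    intro m
    rw [map_mul, map_mul, ← mul_assoc, ← hx, ← hy]
    rfl
  | add x y hx hy =>
    intro m
    rw [map_add (πB K n), mul_add, ← hx, ← hy, ← map_add (sig K n), map_add (Phi0 K n)]
    rfl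

variable (K n)

def psi (z : B K n) : M K := (Phi K n z).unop (e K [])

variable {K n}

lemma sig_psi (z : B K n) : sig K n (psi K n z) = z := by
  obtain ⟨z, rfl⟩ := RingQuot.mkAlgHom_surjective K (BRel K n) z
  change sig K n ((Phi K n (πB K n z)).unop (e K [])) = πB K n z
  rw [Phi_pi, sig_Phi0, sig_e (w := []) (by trivial), prodB, one_mul]

lemma psi_add (x y : B K n) : psi K n (x + y) = psi K n x + psi K n y := by
  simp [psi]

lemma psi_zero : psi K n 0 = 0 := by
  simp [psi]

lemma psi_b (x : B K n) {i : ℕ} (hi : i ≤ n) :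
    psi K n (x * bB K n i) = S K n (G.b i) (psi K n x) := by
  unfold psi
  rw [map_mul, bB, Phi_pi, Phi0_b hi]
  rfl

lemma psi_c (x : B K n) {i : ℕ} (hi : i ≤ n) :
    psi K n (x * cB K n i) = S K n (G.c i) (psi K n x) := by
  unfold psi
  rw [map_mul, cB, Phi_pi, Phi0_c hi]
  rfl

variable (K n)

/-- strip a given suffix from normal words -/
def strip (s : List G) : M K →ₗ[K] M K :=
  Finsupp.linearCombination K
    (fun w => if h : Nor n w ∧ ∃ m, w = s ++ m then e K h.2.choose else 0)

variable {K n}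

lemma strip_e {s m : List G} (h : Nor n (s ++ m)) : strip K n s (e K (s ++ m)) = e K m := by
  have h' : Nor n (s ++ m) ∧ ∃ m', s ++ m = s ++ m' := ⟨h, m, rfl⟩
  have := h'.2.choose_spec
  have h2 : h'.2.choose = m := (List.append_cancel_left this).symm
  conv_rhs => rw [← h2]
  rw [strip, e, Finsupp.linearCombination_single, one_smul, dif_pos h']

lemma strip_no {s w : List G} (h : ¬ ∃ m, w = s ++ m) : strip K n s (e K w) = 0 := by
  rw [strip, e, Finsupp.linearCombination_single, one_smul, dif_neg (fun h' => h h'.2)]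

lemma strip_nn {s w : List G} (h : ¬ Nor n w) : strip K n s (e K w) = 0 := by
  rw [strip, e, Finsupp.linearCombination_single, one_smul, dif_neg (fun h' => h h'.1)]

lemma strip_b_c (i j : ℕ) (m : M K) : strip K n [G.b i] (S K n (G.c j) m) = 0 := by
  refine lin_ext (f := strip K n [G.b i] ∘ₗ S K n (G.c j)) (g := 0) ?_ m
  intro w
  simp only [LinearMap.comp_apply, LinearMap.zero_apply]
  by_cases hw : Nor n w
  swap
  · rw [S_nn hw, map_zero]
  by_cases h : ok n (G.c j) w
  · rw [S_ok hw h, strip_no (by simp)]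
  · rw [S_bad_c h, map_zero]

lemma key_b {i : ℕ} (m : M K) :
    sig K n m = sig K n (strip K n [G.b (i+1)] (S K n (G.b (i+1)) m)) +
      sig K n (strip K n [G.a (i+1), G.c (i+1)] m) * (cB K n (i+1 : ℕ) * aB K n (i+1 : ℕ)) := by
  refine lin_ext (f := sig K n) (g := sig K n ∘ₗ strip K n [G.b (i+1)] ∘ₗ S K n (G.b (i+1)) +
    LinearMap.mulRight K (cB K n (i+1 : ℕ) * aB K n (i+1 : ℕ)) ∘ₗ sig K n ∘ₗ
      strip K n [G.a (i+1), G.c (i+1)]) ?_ m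
  intro w
  simp only [LinearMap.comp_apply, LinearMap.add_apply, LinearMap.mulRight_apply]
  by_cases hw : Nor n w
  swap
  · rw [S_nn hw, sig_nn hw, strip_nn hw]; simp
  by_cases h : ok n (G.b (i+1)) w
  · have h1 : strip K n [G.b (i+1)] (e K (G.b (i+1) :: w)) = e K w :=
      strip_e (s := [G.b (i+1)]) (m := w) ⟨h, hw⟩
    rw [S_ok hw h, h1, strip_no, map_zero, zero_mul, add_zero]
    rintro ⟨m, rfl⟩
    simp [ok] at h
  · obtain ⟨k, m, hk, rfl⟩ := not_ok_b h
    obtain rfl : i = k := by omega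
    have h1 : strip K n [G.a (i+1), G.c (i+1)] (e K (G.a (i+1) :: G.c (i+1) :: m)) = e K m :=
      strip_e (s := [G.a (i+1), G.c (i+1)]) (m := m) hw
    rw [S_red hw, h1, map_neg, strip_no (by simp), sig_cons hw, sig_cons hw.2]
    simp [letB, mul_assoc]

lemma key_c {i : ℕ} (hi : i < n) (m : M K) :
    sig K n m = sig K n (strip K n [G.c i] (S K n (G.c i) m)) +
      sig K n (if 1 ≤ i then strip K n [G.c (i-1)] m else 0) * cB K n ((i : ℤ) - 1) := by
  refine lin_ext (f := sig K n) (g := sig K n ∘ₗ strip K n [G.c i] ∘ₗ S K n (G.c i) +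
    LinearMap.mulRight K (cB K n ((i : ℤ) - 1)) ∘ₗ sig K n ∘ₗ
      (if 1 ≤ i then strip K n [G.c (i-1)] else 0)) ?_ m |>.trans ?_
  · intro w
    simp only [LinearMap.comp_apply, LinearMap.add_apply, LinearMap.mulRight_apply]
    by_cases hw : Nor n w
    swap
    · rw [S_nn hw, sig_nn hw]
      split_ifs
      · rw [strip_nn hw]; simp
      · simp
    by_cases h : ok n (G.c i) w
    · have h1 : strip K n [G.c i] (e K (G.c i :: w)) = e K w :=
        strip_e (s := [G.c i]) (m := w) ⟨h, hw⟩
      rw [S_ok hw h, h1]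
      split_ifs with h0
      · rw [strip_no, map_zero, zero_mul, add_zero]
        rintro ⟨m, rfl⟩
        apply h.2
        exact ⟨i - 1, m, by omega, rfl⟩
      · simp
    · have h2 : ∃ k m, i = k + 1 ∧ w = G.c k :: m := by
        simp only [ok] at h
        have : i ≠ n := by omega
        tauto
      rw [S_bad_c h]
      obtain ⟨k, m, rfl, rfl⟩ := h2
      have h1 : strip K n [G.c k] (e K (G.c k :: m)) = e K m :=
        strip_e (s := [G.c k]) (m := m) hw
      rw [if_pos (by omega), Nat.add_sub_cancel, h1, sig_cons hw]
      simp [letB]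
  · simp only [LinearMap.comp_apply, LinearMap.add_apply, LinearMap.mulRight_apply]
    split_ifs <;> simp

end
end Aux

/-- Lemma 3.3(2). For `1 ≤ i ≤ n`, the kernel of `(u,v) ↦ u b_i + v c_{i-1}`
is `{(w c_i a_i, w a_{i-1} b_{i-1} + x c_{i-2}) : w, x ∈ B}`. -/
theorem stmt_9 (K : Type) [Field K] (n : ℕ) (i : ℕ) (h1 : 1 ≤ i) (h2 : i ≤ n) :
    ∀ u v : B K n,
      (u * bB K n i + v * cB K n ((i : ℤ) - 1) = 0) ↔
      (∃ w x : B K n,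
        u = w * (cB K n i * aB K n i) ∧
        v = w * (aB K n ((i : ℤ) - 1) * bB K n ((i : ℤ) - 1)) + x * cB K n ((i : ℤ) - 2)) := by
  obtain ⟨j, rfl⟩ : ∃ j, i = j + 1 := ⟨i - 1, by omega⟩
  have hj : j < n := h2
  have e1 : ((j + 1 : ℕ) : ℤ) - 1 = (j : ℤ) := by push_cast; ring
  have e2 : ((j + 1 : ℕ) : ℤ) - 2 = (j : ℤ) - 1 := by push_cast; ring
  rw [e1, e2]
  have hr := Aux.caB (K := K) hj
  intro u v
  constructor
  · intro h
    have hp := congrArg (Aux.psi K n) h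
    rw [Aux.psi_add, Aux.psi_zero, Aux.psi_b u h2, Aux.psi_c v hj.le] at hp
    have hs := congrArg (Aux.strip K n [Aux.G.b (j+1)]) hp
    rw [map_add, Aux.strip_b_c, add_zero, map_zero] at hs
    have hu := Aux.key_b (n := n) (i := j) (Aux.psi K n u)
    rw [hs, map_zero, zero_add, Aux.sig_psi] at hu
    obtain ⟨w, hw⟩ : ∃ w, w = Aux.sig K n
      (Aux.strip K n [Aux.G.a (j+1), Aux.G.c (j+1)] (Aux.psi K n u)) := ⟨_, rfl⟩
    rw [← hw] at hu
    obtain ⟨v', hv'⟩ : ∃ v', v' = v - w * (aB K n j * bB K n j) := ⟨_, rfl⟩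
    have h0 : v' * cB K n j = 0 := by
      rw [hv', Aux.Bsub_mul, mul_assoc, hr, Aux.Bmul_neg, sub_neg_eq_add, ← mul_assoc, ← hu, add_comm]
      exact h
    have hp2 := congrArg (Aux.psi K n) h0
    rw [Aux.psi_zero, Aux.psi_c v' hj.le] at hp2
    have hk := Aux.key_c hj (Aux.psi K n v')
    rw [hp2, map_zero, map_zero, zero_add, Aux.sig_psi] at hk
    obtain ⟨x, hx⟩ : ∃ x, v' = x * cB K n ((j : ℤ) - 1) := ⟨_, hk⟩
    refine ⟨w, x, hu, ?_⟩
    rw [← hx, hv']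
    exact (add_sub_cancel _ _).symm
  · rintro ⟨w, x, rfl, rfl⟩
    have hc : cB K n ((j : ℤ) - 1) * cB K n j = 0 := by
      rcases j with _ | k
      · have : cB K n (((0 : ℕ) : ℤ) - 1) = 0 := by
          unfold cB gc
          rw [dif_neg (by omega), map_zero]
        rw [this, zero_mul]
      · have e3 : ((k + 1 : ℕ) : ℤ) - 1 = (k : ℤ) := by push_cast; ring
        rw [e3]
        exact Aux.ccB (by omega)
    rw [add_mul, mul_assoc x, hc, mul_assoc w, mul_assoc w, hr, Aux.Bmul_neg, mul_zero, add_zero,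
      add_neg_cancel]
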